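/- arXiv:1906.10029 — 5 statements merged into one kernel-verified Lean document; each statement's English description precedes it below -/
import Mathlib

section
/- Let (Σₙ)_{n∈ℕ} be a sequence of nonempty metric spaces and pₙ : Σₙ₊₁ → Σₙ a sequence of maps such that: (i) each pₙ is a covering map; (ii) every point of Σₙ₊₁ has an open neighbourhood on which pₙ restricts to an isometry (dist(pₙ a, pₙ b) = dist(a, b) for all a, b in the neighbourhood); (iii) for every n, any two points of Σₙ are joined by a continuous path of finite length. Let L = {x ∈ ∏ₙ Σₙ : pₙ(xₙ₊₁) = xₙ for all n}, endowed with the subspace topology from the product topology. Then for every y ∈ L, the set {y' ∈ L : ∃ C, ∀ n, dist(yₙ, y'ₙ) ≤ C} (the leaf of y) is dense in L. -/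
/-! A rectifiable path lifts through a covering map, and if the map is locally isometric the lift
has the same length, by cutting it into pieces on which the map is an isometry. Given `x` and `y`
in the inverse limit and a level `N`, join `y N` to `x N` by a path of finite length `ℓ` and lift
it to all levels above `N`, starting at the coordinates of `y`. The endpoints of the lifts,
together with the coordinates of `x` below `N`, form a point that stays within distance `ℓ` of `y`
from level `N` on and agrees with `x` up to level `N`. -/

open Set Filter Topology unitInterval
open scoped NNReal

section Variation

variable {E F : Type*} [PseudoEMetricSpace E] [PseudoEMetricSpace F]

theorem eVariationOn_le_of_edist_le {α : Type*} [LinearOrder α] {f : α → E} {g : α → F}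
    {s : Set α} (h : ∀ a ∈ s, ∀ b ∈ s, edist (f a) (f b) ≤ edist (g a) (g b)) :
    eVariationOn f s ≤ eVariationOn g s :=
  iSup_mono fun ⟨_, _, _, hu⟩ => Finset.sum_le_sum fun i _ => h _ (hu (i + 1)) _ (hu i)

theorem eVariationOn_univ_le_of_locally_edist_le {f : I → E} {g : I → F}
    (h : ∀ t, ∃ U ∈ 𝓝 t, ∀ a ∈ U, ∀ b ∈ U, edist (f a) (f b) ≤ edist (g a) (g b)) :
    eVariationOn f univ ≤ eVariationOn g univ := by
  choose U hU hfg using h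
  obtain ⟨t, t_zero, t_mono, ⟨n, t_one⟩, t_sub⟩ :=
    exists_monotone_Icc_subset_open_cover_unitInterval (c := fun s => interior (U s))
      (fun _ => isOpen_interior) fun s _ => mem_iUnion.2 ⟨s, mem_interior_iff_mem_nhds.2 (hU s)⟩
  have univ_eq : (univ : Set I) = Icc (t 0) (t n) := by
    rw [t_zero, t_one n le_rfl]
    exact Icc_bot_top.symm
  rw [univ_eq, ← eVariationOn.sum' f t_mono, ← eVariationOn.sum' g t_mono]
  refine Finset.sum_le_sum fun i _ => ?_
  obtain ⟨s, hs⟩ := t_sub i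
  have hsU := hs.trans interior_subset
  exact eVariationOn_le_of_edist_le fun a ha b hb => hfg s a (hsU ha) b (hsU hb)

end Variation

section JoinedWithin

/-- The points `x` and `y` are joined by a path of length at most `ℓ`, the length of a path being
its total variation. -/
def JoinedWithin {X : Type*} [PseudoEMetricSpace X] (ℓ : ℝ≥0) (x y : X) : Prop :=
  ∃ γ : Path x y, eVariationOn γ univ ≤ ℓ

theorem JoinedWithin.edist_le {X : Type*} [PseudoEMetricSpace X] {ℓ : ℝ≥0} {x y : X}
    (h : JoinedWithin ℓ x y) : edist x y ≤ ℓ := by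
  obtain ⟨γ, hγ⟩ := h
  simpa only [γ.source, γ.target] using
    (eVariationOn.edist_le γ (mem_univ 0) (mem_univ 1)).trans hγ

theorem exists_joinedWithin_of_boundedVariationOn {X : Type*} [PseudoEMetricSpace X] {x y : X}
    {γ : ℝ → X} (hγ : ContinuousOn γ (Icc 0 1)) (h₀ : γ 0 = x) (h₁ : γ 1 = y)
    (hV : BoundedVariationOn γ (Icc 0 1)) : ∃ ℓ : ℝ≥0, JoinedWithin ℓ x y := by
  refine ⟨(eVariationOn γ (Icc 0 1)).toNNReal, Path.ofLine hγ h₀ h₁, ?_⟩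
  rw [ENNReal.coe_toNNReal hV]
  exact eVariationOn.comp_le_of_monotoneOn γ (fun t : I => (t : ℝ))
    ((Subtype.mono_coe _).monotoneOn _) fun t _ => t.2

end JoinedWithin

section Lifting

/-- Every path in the base lifts to a path starting at any prescribed point above its source. The
lift need not be unique. -/
def HasPathLifting {E X : Type*} [TopologicalSpace E] [TopologicalSpace X] (p : E → X) : Prop :=
  ∀ (γ : C(I, X)) (e : E), γ 0 = p e → ∃ Γ : C(I, E), p ∘ Γ = γ ∧ Γ 0 = e

/-- A map that does not decrease distances between points of a small enough neighbourhood of any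
given point: the half of being a local isometry that bounds the length of a lift. -/
def LocallyExpanding {E X : Type*} [PseudoEMetricSpace E] [PseudoEMetricSpace X] (p : E → X) :
    Prop :=
  ∀ e, ∃ U ∈ 𝓝 e, ∀ a ∈ U, ∀ b ∈ U, edist a b ≤ edist (p a) (p b)

theorem locallyExpanding_of_locally_dist_eq {E X : Type*} [PseudoMetricSpace E]
    [PseudoMetricSpace X] {p : E → X}
    (h : ∀ e, ∃ U : Set E, IsOpen U ∧ e ∈ U ∧ ∀ a ∈ U, ∀ b ∈ U, dist (p a) (p b) = dist a b) :
    LocallyExpanding p := by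
  intro e
  obtain ⟨U, hU, heU, hdist⟩ := h e
  refine ⟨U, hU.mem_nhds heU, fun a ha b hb => ?_⟩
  rw [edist_dist, edist_dist, hdist a ha b hb]

variable {E X : Type*} [PseudoEMetricSpace E] [PseudoEMetricSpace X] {p : E → X}

theorem LocallyExpanding.eVariationOn_le_comp (hp : LocallyExpanding p) {Γ : I → E}
    (hΓ : Continuous Γ) : eVariationOn Γ univ ≤ eVariationOn (p ∘ Γ) univ := by
  refine eVariationOn_univ_le_of_locally_edist_le fun t => ?_
  obtain ⟨U, hU, hexp⟩ := hp (Γ t)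
  exact ⟨Γ ⁻¹' U, hΓ.continuousAt hU, fun a ha b hb => hexp _ ha _ hb⟩

theorem JoinedWithin.exists_lift {ℓ : ℝ≥0} {e : E} {x : X} (h : JoinedWithin ℓ (p e) x)
    (hlift : HasPathLifting p) (hexp : LocallyExpanding p) :
    ∃ e', p e' = x ∧ JoinedWithin ℓ e e' := by
  obtain ⟨γ, hγ⟩ := h
  obtain ⟨Γ, hΓ, hΓ₀⟩ := hlift γ e γ.source
  refine ⟨Γ 1, (congrFun hΓ 1).trans γ.target, ⟨Γ, hΓ₀, rfl⟩, ?_⟩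
  calc eVariationOn Γ univ ≤ eVariationOn (p ∘ Γ) univ := hexp.eVariationOn_le_comp Γ.continuous
    _ = eVariationOn γ univ := congrArg (eVariationOn · univ) hΓ
    _ ≤ ℓ := hγ

end Lifting

section InverseLimit

/-- The inverse limit of the tower of maps `p n : S (n + 1) → S n`. When the `S n` are topological
spaces it carries the subspace topology of the product. -/
abbrev InverseLimit {S : ℕ → Type*} (p : ∀ n, S (n + 1) → S n) : Type _ :=
  {x : ∀ n, S n // ∀ n, p n (x (n + 1)) = x n}

theorem InverseLimit.exists_forall_of_lift {S : ℕ → Type*} {p : ∀ n, S (n + 1) → S n}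
    {P : ∀ n, S n → Prop} {s₀ : S 0} (hs₀ : P 0 s₀)
    (hlift : ∀ n s, P n s → ∃ s', p n s' = s ∧ P (n + 1) s') :
    ∃ z : InverseLimit p, ∀ n, P n (z.1 n) := by
  choose next p_next P_next using hlift
  let z : ∀ n, {s : S n // P n s} :=
    fun n => Nat.rec ⟨s₀, hs₀⟩ (fun n s => ⟨next n s s.2, P_next n s s.2⟩) n
  refine ⟨⟨fun n => (z n).1, fun n => ?_⟩, fun n => (z n).2⟩
  exact p_next n (z n).1 (z n).2

theorem InverseLimit.exists_eq_and_rel {S : ℕ → Type*} {p : ∀ n, S (n + 1) → S n}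
    {R : ∀ n, S n → S n → Prop}
    (hR : ∀ n a b, R n (p n a) b → ∃ b', p n b' = b ∧ R (n + 1) a b')
    {x y : InverseLimit p} {N : ℕ} (hN : R N (y.1 N) (x.1 N)) :
    ∃ z : InverseLimit p, (∀ n ≤ N, z.1 n = x.1 n) ∧ ∀ n ≥ N, R n (y.1 n) (z.1 n) := by
  let P : ∀ n, S n → Prop := fun n s => (n ≤ N → s = x.1 n) ∧ (N ≤ n → R n (y.1 n) s)
  have P_x : ∀ n ≤ N, P n (x.1 n) := fun n hn =>
    ⟨fun _ => rfl, fun hn' => by rwa [le_antisymm hn hn']⟩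
  have P_lift : ∀ n s, P n s → ∃ s', p n s' = s ∧ P (n + 1) s' := by
    rintro n s ⟨hs_eq, hs_rel⟩
    rcases lt_or_ge n N with hn | hn
    · exact ⟨x.1 (n + 1), (x.2 n).trans (hs_eq hn.le).symm, P_x (n + 1) hn⟩
    · obtain ⟨s', hs', hrel⟩ := hR n (y.1 (n + 1)) s (by simpa only [y.2 n] using hs_rel hn)
      exact ⟨s', hs', fun hn' => absurd hn' (by lia), fun _ => hrel⟩
  obtain ⟨z, hz⟩ := InverseLimit.exists_forall_of_lift (P_x 0 N.zero_le) P_lift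
  exact ⟨z, fun n => (hz n).1, fun n => (hz n).2⟩

theorem dense_of_forall_exists_eq_le {S : ℕ → Type*} [∀ n, TopologicalSpace (S n)]
    {P : (∀ n, S n) → Prop} {A : Set (Subtype P)}
    (h : ∀ (x : Subtype P) (N : ℕ), ∃ z ∈ A, ∀ n ≤ N, z.1 n = x.1 n) : Dense A := by
  intro x
  choose z hzA hzx using h x
  refine mem_closure_of_tendsto (b := atTop) ?_ (Eventually.of_forall hzA)
  rw [tendsto_subtype_rng, tendsto_pi_nhds]
  intro n
  refine tendsto_const_nhds.congr' ?_
  filter_upwards [eventually_ge_atTop n] with N hN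
  exact (hzx N n hN).symm

/-- The leaf of `y` in an inverse limit of metric spaces: the points whose coordinates stay at
bounded distance from those of `y`. -/
def InverseLimit.leaf {S : ℕ → Type*} [∀ n, PseudoMetricSpace (S n)] {p : ∀ n, S (n + 1) → S n}
    (y : InverseLimit p) : Set (InverseLimit p) :=
  {y' | ∃ C : ℝ, ∀ n, dist (y.1 n) (y'.1 n) ≤ C}

theorem InverseLimit.mem_leaf_of_eventually_le {S : ℕ → Type*} [∀ n, PseudoMetricSpace (S n)]
    {p : ∀ n, S (n + 1) → S n} {y z : InverseLimit p} {C : ℝ}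
    (h : ∀ᶠ n in atTop, dist (y.1 n) (z.1 n) ≤ C) : z ∈ y.leaf := by
  obtain ⟨D, hD⟩ := (isBoundedUnder_of_eventually_le h).bddAbove_range
  exact ⟨D, fun n => hD (mem_range_self n)⟩

end InverseLimit

theorem leaf_dense_in_inverse_limit_of_tower_general
    {S : ℕ → Type*} [∀ n, PseudoMetricSpace (S n)] {p : ∀ n, S (n + 1) → S n}
    (hlift : ∀ n, HasPathLifting (p n)) (hexp : ∀ n, LocallyExpanding (p n))
    (hjoined : ∀ n, ∀ x y : S n, ∃ ℓ : ℝ≥0, JoinedWithin ℓ x y) (y : InverseLimit p) :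
    Dense y.leaf := by
  refine dense_of_forall_exists_eq_le fun x N => ?_
  obtain ⟨ℓ, hℓ⟩ := hjoined N (y.1 N) (x.1 N)
  obtain ⟨z, hzx, hyz⟩ := InverseLimit.exists_eq_and_rel (R := fun _ => JoinedWithin ℓ)
    (fun n _ _ h => h.exists_lift (hlift n) (hexp n)) hℓ
  refine ⟨z, InverseLimit.mem_leaf_of_eventually_le (C := ℓ) ?_, hzx⟩
  filter_upwards [eventually_ge_atTop N] with n hn
  exact edist_le_coe.1 (hyz n hn).edist_le

/-- Minimality of the lamination defined by a tower of locally isometric covering maps of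
nonempty, rectifiably path-connected metric spaces: in the inverse limit `L`, the leaf of
every point (the set of points at uniformly bounded coordinate-wise distance) is dense. -/
theorem leaf_dense_in_inverse_limit_of_tower
    {S : ℕ → Type*} [∀ n, MetricSpace (S n)] [∀ n, Nonempty (S n)]
    (p : ∀ n, S (n + 1) → S n)
    (hcov : ∀ n, IsCoveringMap (p n))
    (hloc : ∀ n, ∀ x : S (n + 1), ∃ U : Set (S (n + 1)), IsOpen U ∧ x ∈ U ∧
      ∀ a ∈ U, ∀ b ∈ U, dist (p n a) (p n b) = dist a b)
    (hpath : ∀ n, ∀ x y : S n, ∃ γ : ℝ → S n, ContinuousOn γ (Set.Icc 0 1) ∧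
      γ 0 = x ∧ γ 1 = y ∧ eVariationOn γ (Set.Icc 0 1) ≠ ⊤)
    (y : {x : ∀ n, S n // ∀ n, p n (x (n + 1)) = x n}) :
    Dense {y' : {x : ∀ n, S n // ∀ n, p n (x (n + 1)) = x n} |
      ∃ C : ℝ, ∀ n, dist (y.1 n) (y'.1 n) ≤ C} := by
  refine leaf_dense_in_inverse_limit_of_tower_general (fun n => (hcov n).exists_path_lifts)
    (fun n => locallyExpanding_of_locally_dist_eq (hloc n)) (fun n x y => ?_) y
  obtain ⟨γ, hγ, h₀, h₁, hV⟩ := hpath n x y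
  exact exists_joinedWithin_of_boundedVariationOn hγ h₀ h₁ hV
end

section
/- Let (Σₙ)_{n∈ℕ} be metric spaces, pₙ : Σₙ₊₁ → Σₙ be 1-Lipschitz maps, and Qₙ ⊆ Σₙ be finite subsets satisfying pₙ(Qₙ₊₁) ⊆ Qₙ for every n. Let x = (xₙ) be a coherent sequence, i.e. pₙ(xₙ₊₁) = xₙ for all n. Suppose there exists C ≥ 0 such that for infinitely many n there is a point q ∈ Qₙ with dist(xₙ, q) ≤ C. Then there exists a coherent sequence y = (yₙ) (pₙ(yₙ₊₁) = yₙ for all n) with yₙ ∈ Qₙ and dist(xₙ, yₙ) ≤ C for every n. -/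
/-! The marked points within distance `C` of `x n` form a subtower, because `p n` is `1`-Lipschitz
and sends `x (n + 1)` to `x n`. A nonempty level of this subtower forces all lower levels to be
nonempty, so the levels are all nonempty, and Kőnig's lemma gives a coherent sequence. -/

section Tower

open CategoryTheory

variable {α : ℕ → Type*} (p : ∀ n, α (n + 1) → α n)

theorem exists_coherent_of_finite_of_nonempty [∀ n, Finite (α n)] [∀ n, Nonempty (α n)] :
    ∃ y : ∀ n, α n, ∀ n, p n (y (n + 1)) = y n := by
  let F : ℕᵒᵖ ⥤ Type _ := Functor.ofOpSequence fun n => ↾(p n)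
  have : ∀ j, Finite (F.obj j) := fun j => inferInstanceAs (Finite (α j.unop))
  have : ∀ j, Nonempty (F.obj j) := fun j => inferInstanceAs (Nonempty (α j.unop))
  obtain ⟨y, hy⟩ := nonempty_sections_of_finite_inverse_system F
  refine ⟨fun n => y (.op n), fun n => ?_⟩
  have hmap : F.map (homOfLE (Nat.le_add_right n 1)).op = ↾(p n) :=
    Functor.ofOpSequence_map_homOfLE_succ _ n
  exact (ConcreteCategory.congr_hom hmap (y (.op (n + 1)))).symm.trans (hy _)

variable {p} {T : ∀ n, Set (α n)}

theorem antitone_nonempty_of_mapsTo (hT : ∀ n, Set.MapsTo (p n) (T (n + 1)) (T n)) :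
    Antitone fun n => (T n).Nonempty :=
  antitone_nat_of_succ_le fun n ⟨q, hq⟩ => ⟨p n q, hT n hq⟩

theorem exists_coherent_mem_of_infinite_nonempty
    (hT : ∀ n, Set.MapsTo (p n) (T (n + 1)) (T n)) (hfin : ∀ n, (T n).Finite)
    (hinf : {n | (T n).Nonempty}.Infinite) :
    ∃ y : ∀ n, α n, (∀ n, p n (y (n + 1)) = y n) ∧ ∀ n, y n ∈ T n := by
  have hne (n : ℕ) : (T n).Nonempty := by
    obtain ⟨m, hm, hnm⟩ := hinf.exists_gt n
    exact antitone_nonempty_of_mapsTo hT hnm.le hm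
  have (n : ℕ) : Finite (T n) := (hfin n).to_subtype
  have (n : ℕ) : Nonempty (T n) := (hne n).to_subtype
  obtain ⟨y, hy⟩ := exists_coherent_of_finite_of_nonempty (α := fun n => T n)
    fun n => (hT n).restrict
  exact ⟨fun n => y n, fun n => congrArg Subtype.val (hy n), fun n => (y n).2⟩

end Tower

theorem exists_coherent_marked_sequence_at_bounded_distance_general
    {S : ℕ → Type*} [∀ n, PseudoMetricSpace (S n)]
    (p : ∀ n, S (n + 1) → S n)
    (hp : ∀ n, ∀ a b : S (n + 1), dist (p n a) (p n b) ≤ dist a b)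
    (Q : ∀ n, Set (S n)) (hQ : ∀ n, ∀ q ∈ Q (n + 1), p n q ∈ Q n)
    (x : ∀ n, S n) (hx : ∀ n, p n (x (n + 1)) = x n)
    (C : ℝ) (hfin : ∀ n, {q ∈ Q n | dist (x n) q ≤ C}.Finite)
    (hinf : {n : ℕ | ∃ q ∈ Q n, dist (x n) q ≤ C}.Infinite) :
    ∃ y : ∀ n, S n, (∀ n, p n (y (n + 1)) = y n) ∧
      ∀ n, y n ∈ Q n ∧ dist (x n) (y n) ≤ C := by
  have hmaps (n : ℕ) : Set.MapsTo (p n) {q ∈ Q (n + 1) | dist (x (n + 1)) q ≤ C}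
      {q ∈ Q n | dist (x n) q ≤ C} := by
    rintro q ⟨hqQ, hqC⟩
    refine ⟨hQ n q hqQ, ?_⟩
    calc dist (x n) (p n q) = dist (p n (x (n + 1))) (p n q) := by rw [hx n]
      _ ≤ dist (x (n + 1)) q := hp n _ _
      _ ≤ C := hqC
  exact exists_coherent_mem_of_infinite_nonempty hmaps hfin hinf

/-- Diagonal argument: if a coherent sequence `x` for a tower of 1-Lipschitz maps stays
within distance `C` of the finite marked sets `Q n` for infinitely many `n`, then there
is a coherent sequence of marked points within distance `C` of `x` at every level. -/
theorem exists_coherent_marked_sequence_at_bounded_distance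
    {S : ℕ → Type*} [∀ n, MetricSpace (S n)]
    (p : ∀ n, S (n + 1) → S n)
    (hp : ∀ n, ∀ a b : S (n + 1), dist (p n a) (p n b) ≤ dist a b)
    (Q : ∀ n, Set (S n)) (hQfin : ∀ n, (Q n).Finite)
    (hQ : ∀ n, ∀ q ∈ Q (n + 1), p n q ∈ Q n)
    (x : ∀ n, S n) (hx : ∀ n, p n (x (n + 1)) = x n)
    (C : ℝ) (hC : 0 ≤ C)
    (hinf : {n : ℕ | ∃ q ∈ Q n, dist (x n) q ≤ C}.Infinite) :
    ∃ y : ∀ n, S n, (∀ n, p n (y (n + 1)) = y n) ∧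
      ∀ n, y n ∈ Q n ∧ dist (x n) (y n) ≤ C :=
  exists_coherent_marked_sequence_at_bounded_distance_general p hp Q hQ x hx C
    (fun n => (hQfin n).subset (Set.sep_subset _ _)) hinf
end

section
/- For every natural number N ≥ 2 there exist permutations a, b of Fin (N+1) such that the cycle type of a is {N} (that is, a is a single cycle of length N and fixes exactly one point of Fin (N+1)) and the commutator a·b·a⁻¹·b⁻¹ has no fixed point (for every x ∈ Fin (N+1), (a·b·a⁻¹·b⁻¹)(x) ≠ x). -/
/-!
The commutator of `a` and `b` fixes no point exactly when `a` and its conjugate `b * a * b⁻¹` agree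
at no point. Take for `a` the cycle `(0 1 … N-1)`, which fixes only `N`, and for `b` the reversal
`j ↦ N - j`. Then the fixed point of each of `a` and its conjugate is moved by the other, and
elsewhere `a` goes one step up and its conjugate one step down, apart from their wrap-arounds.
-/

theorem forall_commutator_apply_ne_iff {α : Type*} (a b : Equiv.Perm α) :
    (∀ x, (a * b * a⁻¹ * b⁻¹) x ≠ x) ↔ ∀ y, a (b y) ≠ b (a y) := by
  rw [← (b * a).forall_congr_right]
  simp

theorem cycleRange_apply_ne_self_of_le {n : ℕ} {i j : Fin n} (hi : 0 < (i : ℕ)) (hj : j ≤ i) :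
    i.cycleRange j ≠ j := by
  rw [Ne, Fin.ext_iff, Fin.coe_cycleRange_of_le hj]
  split_ifs with hji
  · exact hji ▸ hi.ne
  · exact Nat.succ_ne_self _

theorem cycleRange_rev_ne_rev_cycleRange_of_le {n : ℕ} {i y : Fin n} (hn : 3 ≤ n)
    (hy : y ≤ i) (hy_rev : y.rev ≤ i) : i.cycleRange y.rev ≠ (i.cycleRange y).rev := by
  intro h
  have sum_values : (i.cycleRange y.rev : ℕ) + i.cycleRange y + 1 = n := by
    rw [h, Fin.val_rev]
    omega
  rw [Fin.coe_cycleRange_of_le hy, Fin.coe_cycleRange_of_le hy_rev] at sum_values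
  simp only [Fin.le_def, Fin.ext_iff, Fin.val_rev] at hy hy_rev sum_values
  -- Without a wrap-around the sum is `n + 2`, and with two it is `1`. With exactly one it equals
  -- `n` only if `i = 1`, and then `n = 3`, where both points wrap around.
  split_ifs at sum_values <;> omega

/-- The bound on `n` says that no point and its reversal both lie beyond `i`. -/
theorem cycleRange_rev_ne_rev_cycleRange {n : ℕ} {i : Fin n} (hn : 3 ≤ n)
    (hi : n ≤ 2 * (i + 1)) (y : Fin n) : i.cycleRange y.rev ≠ (i.cycleRange y).rev := by
  have hi_pos : 0 < (i : ℕ) := by omega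
  rcases le_or_gt y i with hy | hy
  · rcases le_or_gt y.rev i with hy_rev | hy_rev
    · exact cycleRange_rev_ne_rev_cycleRange_of_le hn hy hy_rev
    · rw [Fin.cycleRange_of_gt hy_rev]
      exact Fin.rev_injective.ne (cycleRange_apply_ne_self_of_le hi_pos hy).symm
  · have hy_rev : y.rev ≤ i := by
      rw [Fin.le_def, Fin.val_rev]
      omega
    rw [Fin.cycleRange_of_gt hy]
    exact cycleRange_apply_ne_self_of_le hi_pos hy_rev

/-- For every `N ≥ 2`, there are permutations `a b` of `Fin (N+1)` such that `a` is a single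
`N`-cycle (fixing exactly one point) and the commutator `a * b * a⁻¹ * b⁻¹` has no fixed
point. -/
theorem exists_perms_cycle_and_fixed_point_free_commutator
    (N : ℕ) (hN : 2 ≤ N) :
    ∃ a b : Equiv.Perm (Fin (N + 1)),
      a.cycleType = {N} ∧ ∀ x : Fin (N + 1), (a * b * a⁻¹ * b⁻¹) x ≠ x := by
  let i : Fin (N + 1) := ⟨N - 1, by omega⟩
  have hi : (i : ℕ) + 1 = N := Nat.sub_add_cancel (by omega)
  have hi_ne : i ≠ 0 := Fin.val_ne_zero_iff.mp (by omega)
  refine ⟨i.cycleRange, Fin.revPerm, ?_, ?_⟩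
  · rw [Fin.cycleType_cycleRange hi_ne, hi]
  · exact (forall_commutator_apply_ne_iff _ _).mpr
      (cycleRange_rev_ne_rev_cycleRange (by omega) (by omega))
end

section
/- For every natural number N ≥ 4 there exist permutations a, b, c of Fin (N+1) such that the cycle type of a is {N} (that is, a is a single cycle of length N and fixes exactly one point of Fin (N+1)) and the permutation a·(b·c·b⁻¹·c⁻¹) has no fixed point (for every x ∈ Fin (N+1), (a·b·c·b⁻¹·c⁻¹)(x) ≠ x). -/
/-!
A `3`-cycle is the commutator of two transpositions. If `x` is the only fixed point of `a`, then
multiplying `a` on the right by the `3`-cycle `x ↦ z ↦ y ↦ x` unfixes `x`, and it creates no new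
fixed point as long as `a y ≠ z`. Four points leave room for such a `z`, and an `N`-cycle on `N + 1`
points has exactly one fixed point.
-/

section

open Equiv Function
open scoped Cardinal commutatorElement

variable {α : Type*}

theorem commutatorElement_swap_swap [DecidableEq α] {x y z : α} (hxy : x ≠ y) (hxz : x ≠ z) :
    ⁅swap x y, swap y z⁆ = swap x y * swap x z := by
  rw [commutatorElement_def, swap_inv, swap_inv, mul_assoc, mul_assoc, ← mul_assoc (swap y z),
    swap_mul_swap_mul_swap hxy hxz, swap_comm z x]

theorem mul_swap_mul_swap_mem_derangements [DecidableEq α] {a : Perm α} {x y z : α}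
    (hyz : y ≠ z) (ha : fixedPoints a ⊆ {x, y, z})
    (hx : a x ≠ y) (hy : a y ≠ z) (hz : a z ≠ x) :
    a * (swap x y * swap x z) ∈ derangements α := by
  intro w
  obtain rfl | hwz := eq_or_ne w z
  · simpa using hy
  obtain rfl | hwx := eq_or_ne w x
  · simpa [swap_apply_of_ne_of_ne hwz.symm hyz.symm] using hz
  obtain rfl | hwy := eq_or_ne w y
  · simpa [swap_apply_of_ne_of_ne hwx hwz] using hx
  have haw : a w ≠ w := fun h ↦ by simpa [hwx, hwy, hwz] using ha h
  simpa [swap_apply_of_ne_of_ne hwx hwy, swap_apply_of_ne_of_ne hwx hwz] using haw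

theorem exists_mul_commutatorElement_mem_derangements {a : Perm α} {x : α}
    (hα : 3 < #α) (ha : fixedPoints a = {x}) :
    ∃ b c : Perm α, a * ⁅b, c⁆ ∈ derangements α := by
  classical
  have hx : a x = x := ha.ge rfl
  have : Nontrivial α := Cardinal.one_lt_iff_nontrivial.mp (lt_trans (by norm_num) hα)
  obtain ⟨y, hyx⟩ := exists_ne x
  obtain ⟨z, hz⟩ := Cardinal.exists_notMem_of_length_lt [x, y, a y] (by simpa using hα)
  simp only [List.mem_cons, List.not_mem_nil, or_false, not_or] at hz
  obtain ⟨hzx, hzy, hzay⟩ := hz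
  have hazx : a z ≠ x := fun h ↦ hzx (a.injective (h.trans hx.symm))
  refine ⟨swap x y, swap y z, ?_⟩
  rw [commutatorElement_swap_swap hyx.symm (Ne.symm hzx)]
  exact mul_swap_mul_swap_mem_derangements (Ne.symm hzy) (by simp [ha])
    (hx.trans_ne hyx.symm) (Ne.symm hzay) hazx

theorem exists_fixedPoints_eq_singleton_of_sum_cycleType [Fintype α] [DecidableEq α] {a : Perm α}
    (ha : a.cycleType.sum + 1 = Fintype.card α) : ∃ x, fixedPoints a = {x} := by
  rw [← Set.ncard_eq_one, ← Nat.card_coe_set_eq, Nat.card_eq_fintype_card, Perm.card_fixedPoints]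
  omega

theorem exists_perms_cycle_and_fixed_point_free_product_with_commutator_general
    [Fintype α] [DecidableEq α] {N : ℕ} (hN : 3 ≤ N) (hα : Fintype.card α = N + 1) :
    ∃ a b c : Perm α, a.cycleType = {N} ∧ ∀ x, (a * b * c * b⁻¹ * c⁻¹) x ≠ x := by
  obtain ⟨a, ha⟩ : ∃ a : Perm α, a.cycleType = {N} :=
    (Perm.exists_with_cycleType_iff α).mpr ⟨by simp [hα], by simpa using (by omega : 2 ≤ N)⟩
  obtain ⟨x, hx⟩ := exists_fixedPoints_eq_singleton_of_sum_cycleType (a := a) (by simp [ha, hα])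
  have hcard : 3 < #α := by
    rw [Cardinal.mk_fintype, hα]
    exact_mod_cast Nat.lt_succ_of_le hN
  obtain ⟨b, c, hbc⟩ := exists_mul_commutatorElement_mem_derangements hcard hx
  exact ⟨a, b, c, ha, fun y ↦ by simpa only [commutatorElement_def, ← mul_assoc] using hbc y⟩

end

/-- For every `N ≥ 4`, there are permutations `a b c` of `Fin (N+1)` such that `a` is a single
`N`-cycle (fixing exactly one point) and `a * (b * c * b⁻¹ * c⁻¹)` has no fixed point. -/
theorem exists_perms_cycle_and_fixed_point_free_product_with_commutator
    (N : ℕ) (hN : 4 ≤ N) :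
    ∃ a b c : Equiv.Perm (Fin (N + 1)),
      a.cycleType = {N} ∧ ∀ x : Fin (N + 1), (a * b * c * b⁻¹ * c⁻¹) x ≠ x := by
  exact exists_perms_cycle_and_fixed_point_free_product_with_commutator_general (by omega)
    (Fintype.card_fin _)
end

section
/- Work in the upper half-plane ℍ with its hyperbolic metric. Let λ > 1, D ≥ 0, and let γ : ℝ → ℍ be continuous on [0,1] with (γ 1 : ℂ) = λ²·(γ 0 : ℂ) (so the endpoint of γ is the image of its starting point under the hyperbolic translation z ↦ λ²z along the imaginary axis, whose translation length is 2·log λ). Suppose |Re(γ t)| ≥ sinh(D)·Im(γ t) for every t ∈ [0,1] (i.e., γ stays at hyperbolic distance at least D from the imaginary-axis geodesic). Then the length of γ over [0,1] is at least cosh(D)·2·log λ: eVariationOn γ (Icc 0 1) ≥ cosh(D)·2·log λ. -/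
open UpperHalfPlane Set

/-!
In polar coordinates `z = r·exp(iθ)` the hyperbolic metric is `(dr²/r² + dθ²)/sin²θ`, and the
points at distance at least `D` from the imaginary axis are those with `1/sin θ ≥ cosh D`. There
the function `cosh D · log r` does not expand infinitesimal lengths, while `log r` increases by
`2 log λ` along the path.

The infinitesimal statement comes from a finite one. The reverse triangle inequality
`|‖w‖ - ‖z‖| ≤ ‖w - z‖` in `ℂ`, with both sides written through `sinh`, reads
`√(‖z‖ ‖w‖) · |sinh ((log ‖w‖ - log ‖z‖) / 2)| ≤ √(Im z · Im w) · sinh (dist z w / 2)`.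
Since `2 sinh (d / 2)` exceeds `d` by a factor that tends to `1` only as `d → 0`, this makes
`cosh D · log r` locally `K`-Lipschitz for every `K > 1`, which is enough to compare lengths.
-/

open Filter Topology
open scoped NNReal ENNReal

section Variation

variable {E F : Type*} [PseudoEMetricSpace E] [PseudoEMetricSpace F]

theorem eVariationOn_Icc_le_mul_trans {α : Type*} [LinearOrder α] {f : α → F} {g : α → E}
    {K : ℝ≥0∞} {a b c : α} (hab : a ≤ b) (hbc : b ≤ c)
    (h₁ : eVariationOn f (Icc a b) ≤ K * eVariationOn g (Icc a b))
    (h₂ : eVariationOn f (Icc b c) ≤ K * eVariationOn g (Icc b c)) :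
    eVariationOn f (Icc a c) ≤ K * eVariationOn g (Icc a c) := by
  have hf := eVariationOn.Icc_add_Icc f hab hbc (mem_univ b)
  have hg := eVariationOn.Icc_add_Icc g hab hbc (mem_univ b)
  simp only [univ_inter] at hf hg
  rw [← hf, ← hg, mul_add]
  exact add_le_add h₁ h₂

theorem eVariationOn_comp_Icc_le_of_locally_lipschitzOnWith {ψ : E → F} {K : ℝ≥0} {S : Set E}
    (hψ : ∀ p ∈ S, ∃ U ∈ 𝓝[S] p, LipschitzOnWith K ψ U)
    {γ : ℝ → E} {a b : ℝ} (hab : a ≤ b) (hγ : ContinuousOn γ (Icc a b))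
    (hS : MapsTo γ (Icc a b) S) :
    eVariationOn (ψ ∘ γ) (Icc a b) ≤ K * eVariationOn γ (Icc a b) := by
  have hcover (x : Icc a b) : ∃ O : Set E, IsOpen O ∧ γ x ∈ O ∧ LipschitzOnWith K ψ (O ∩ S) := by
    obtain ⟨U, hU, hLip⟩ := hψ (γ x) (hS x.2)
    obtain ⟨O, hO, hxO, hOU⟩ := mem_nhdsWithin.1 hU
    exact ⟨O, hO, hxO, hLip.mono hOU⟩
  choose O hO hxO hLip using hcover
  obtain ⟨t, ht0, htmono, ⟨m, htm⟩, hpiece⟩ := exists_monotone_Icc_subset_open_cover_Icc hab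
    (c := fun x ↦ (Icc a b).domRestrict γ ⁻¹' O x) (fun x ↦ (hO x).preimage hγ.domRestrict)
    (fun x _ ↦ mem_iUnion.2 ⟨x, hxO x⟩)
  have hstep (n : ℕ) : eVariationOn (ψ ∘ γ) (Icc (t n) (t (n + 1))) ≤
      K * eVariationOn γ (Icc (t n) (t (n + 1) : ℝ)) := by
    obtain ⟨x, hx⟩ := hpiece n
    refine (hLip x).comp_eVariationOn_le fun s hs ↦ ?_
    have hs' : s ∈ Icc a b := ⟨(t n).2.1.trans hs.1, hs.2.trans (t (n + 1)).2.2⟩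
    exact ⟨hx (show (⟨s, hs'⟩ : Icc a b) ∈ Icc (t n) (t (n + 1)) from hs), hS hs'⟩
  have hinit (n : ℕ) : eVariationOn (ψ ∘ γ) (Icc a (t n)) ≤ K * eVariationOn γ (Icc a (t n)) := by
    induction n with
    | zero => simp [ht0, eVariationOn.subsingleton]
    | succ n ih => exact eVariationOn_Icc_le_mul_trans (t n).2.1 (htmono n.le_succ) ih (hstep n)
  simpa only [htm m le_rfl] using hinit m

end Variation

theorem eventually_sinh_le_mul {K : ℝ} (hK : 1 < K) : ∀ᶠ x in 𝓝[≥] 0, Real.sinh x ≤ K * x := by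
  have h := ((Real.hasDerivAt_sinh 0).isLittleO.def (sub_pos.2 hK)).filter_mono
    (nhdsWithin_le_nhds (s := Ici 0))
  filter_upwards [h, self_mem_nhdsWithin] with x hx hx0
  simp only [Real.sinh_zero, Real.cosh_zero, sub_zero, smul_eq_mul, mul_one, Real.norm_eq_abs,
    abs_of_nonneg (mem_Ici.1 hx0)] at hx
  linarith [le_abs_self (Real.sinh x - x)]

theorem two_mul_sqrt_mul_sinh_half_log_sub {x y : ℝ} (hx : 0 < x) (hy : 0 < y) :
    2 * √(x * y) * Real.sinh ((Real.log y - Real.log x) / 2) = y - x := by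
  have hexp {u v : ℝ} (hu : 0 < u) (hv : 0 < v) :
      Real.exp ((Real.log v - Real.log u) / 2) = √v / √u := by
    rw [sub_div, Real.exp_sub, ← Real.log_sqrt hu.le, ← Real.log_sqrt hv.le,
      Real.exp_log (Real.sqrt_pos.2 hu), Real.exp_log (Real.sqrt_pos.2 hv)]
  have hx' : √x ≠ 0 := (Real.sqrt_pos.2 hx).ne'
  have hy' : √y ≠ 0 := (Real.sqrt_pos.2 hy).ne'
  rw [Real.sinh_eq, ← neg_div, neg_sub, hexp hx hy, hexp hy hx, Real.sqrt_mul hx.le]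
  field_simp [hx', hy']
  rw [Real.sq_sqrt hx.le, Real.sq_sqrt hy.le]

section LogNorm

variable {c : ℝ} {z w : ℍ}

theorem sqrt_norm_mul_norm_mul_abs_sinh_le (z w : ℍ) :
    √(‖(z : ℂ)‖ * ‖(w : ℂ)‖) * |Real.sinh ((Real.log ‖(w : ℂ)‖ - Real.log ‖(z : ℂ)‖) / 2)| ≤
      √(z.im * w.im) * Real.sinh (dist z w / 2) := by
  have hz : 0 < ‖(z : ℂ)‖ := norm_pos_iff.2 z.ne_zero
  have hw : 0 < ‖(w : ℂ)‖ := norm_pos_iff.2 w.ne_zero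
  have him : 0 < √(z.im * w.im) := Real.sqrt_pos.2 (mul_pos z.im_pos w.im_pos)
  refine le_of_mul_le_mul_left ?_ (two_pos (α := ℝ))
  calc 2 * (√(‖(z : ℂ)‖ * ‖(w : ℂ)‖) *
        |Real.sinh ((Real.log ‖(w : ℂ)‖ - Real.log ‖(z : ℂ)‖) / 2)|)
      = |‖(w : ℂ)‖ - ‖(z : ℂ)‖| := by
        rw [← two_mul_sqrt_mul_sinh_half_log_sub hz hw, abs_mul,
          abs_of_nonneg (mul_nonneg two_pos.le (Real.sqrt_nonneg _)), mul_assoc]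
    _ ≤ dist (z : ℂ) w := by
        rw [dist_comm, dist_eq_norm]
        exact abs_norm_sub_norm_le _ _
    _ = 2 * (√(z.im * w.im) * Real.sinh (dist z w / 2)) := by
        rw [UpperHalfPlane.sinh_half_dist]
        field_simp [him.ne']

theorem mul_abs_sinh_half_log_norm_sub_le (hc : 0 ≤ c) (hz : c * z.im ≤ ‖(z : ℂ)‖)
    (hw : c * w.im ≤ ‖(w : ℂ)‖) :
    c * |Real.sinh ((Real.log ‖(w : ℂ)‖ - Real.log ‖(z : ℂ)‖) / 2)| ≤
      Real.sinh (dist z w / 2) := by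
  have him : 0 < √(z.im * w.im) := Real.sqrt_pos.2 (mul_pos z.im_pos w.im_pos)
  have hsqrt : √(z.im * w.im) * c ≤ √(‖(z : ℂ)‖ * ‖(w : ℂ)‖) := by
    refine Real.le_sqrt_of_sq_le ?_
    rw [mul_pow, Real.sq_sqrt (mul_pos z.im_pos w.im_pos).le]
    calc z.im * w.im * c ^ 2 = (c * z.im) * (c * w.im) := by ring
      _ ≤ ‖(z : ℂ)‖ * ‖(w : ℂ)‖ :=
        mul_le_mul hz hw (mul_nonneg hc w.im_pos.le) (norm_nonneg _)
  refine le_of_mul_le_mul_left ?_ him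
  rw [← mul_assoc]
  exact (mul_le_mul_of_nonneg_right hsqrt (abs_nonneg _)).trans
    (sqrt_norm_mul_norm_mul_abs_sinh_le z w)

theorem mul_abs_log_norm_sub_le (hc : 0 ≤ c) (hz : c * z.im ≤ ‖(z : ℂ)‖)
    (hw : c * w.im ≤ ‖(w : ℂ)‖) :
    c * |Real.log ‖(w : ℂ)‖ - Real.log ‖(z : ℂ)‖| ≤ 2 * Real.sinh (dist z w / 2) := by
  set s := (Real.log ‖(w : ℂ)‖ - Real.log ‖(z : ℂ)‖) / 2 with hs
  have hsinh : |s| ≤ |Real.sinh s| := by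
    rw [Real.abs_sinh]
    exact Real.self_le_sinh_iff.2 (abs_nonneg s)
  have hdouble : |Real.log ‖(w : ℂ)‖ - Real.log ‖(z : ℂ)‖| = 2 * |s| := by
    rw [hs, abs_div, abs_two, mul_div_cancel₀ _ two_ne_zero]
  calc c * |Real.log ‖(w : ℂ)‖ - Real.log ‖(z : ℂ)‖| = 2 * (c * |s|) := by rw [hdouble]; ring
    _ ≤ 2 * (c * |Real.sinh s|) := by gcongr
    _ ≤ 2 * Real.sinh (dist z w / 2) := by
      gcongr
      exact mul_abs_sinh_half_log_norm_sub_le hc hz hw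

theorem exists_lipschitzOnWith_mul_log_norm (hc : 0 ≤ c) {K : ℝ≥0} (hK : 1 < K) (p : ℍ) :
    ∃ U ∈ 𝓝[{z : ℍ | c * z.im ≤ ‖(z : ℂ)‖}] p,
      LipschitzOnWith K (fun z : ℍ ↦ c * Real.log ‖(z : ℂ)‖) U := by
  obtain ⟨δ, hδ, hsinh⟩ := Metric.mem_nhdsWithin_iff.1
    (eventually_sinh_le_mul (K := K) (mod_cast hK))
  refine ⟨Metric.ball p δ ∩ {z | c * z.im ≤ ‖(z : ℂ)‖},
    inter_mem (mem_nhdsWithin_of_mem_nhds (Metric.ball_mem_nhds p hδ)) self_mem_nhdsWithin,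
    LipschitzOnWith.of_dist_le_mul fun w ⟨hwp, hw⟩ z ⟨hzp, hz⟩ ↦ ?_⟩
  have hzw : dist z w / 2 < δ := by
    linarith [dist_triangle_right z w p, Metric.mem_ball.1 hzp, Metric.mem_ball.1 hwp]
  have hhalf : 0 ≤ dist z w / 2 := by positivity
  have hlin : Real.sinh (dist z w / 2) ≤ K * (dist z w / 2) :=
    hsinh ⟨by rwa [Metric.mem_ball, dist_zero_right, Real.norm_of_nonneg hhalf], hhalf⟩
  calc dist (c * Real.log ‖(w : ℂ)‖) (c * Real.log ‖(z : ℂ)‖)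
      = c * |Real.log ‖(w : ℂ)‖ - Real.log ‖(z : ℂ)‖| := by
        rw [Real.dist_eq, ← mul_sub, abs_mul, abs_of_nonneg hc]
    _ ≤ 2 * Real.sinh (dist z w / 2) := mul_abs_log_norm_sub_le hc hz hw
    _ ≤ K * dist w z := by rw [dist_comm w z]; linarith

theorem ofReal_mul_abs_log_norm_sub_le_eVariationOn (hc : 0 ≤ c) {γ : ℝ → ℍ} {a b : ℝ}
    (hab : a ≤ b) (hγ : ContinuousOn γ (Icc a b))
    (hfar : ∀ t ∈ Icc a b, c * (γ t).im ≤ ‖(γ t : ℂ)‖) :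
    ENNReal.ofReal (c * |Real.log ‖(γ b : ℂ)‖ - Real.log ‖(γ a : ℂ)‖|) ≤
      eVariationOn γ (Icc a b) := by
  set φ : ℍ → ℝ := fun z ↦ c * Real.log ‖(z : ℂ)‖
  have hφ : ENNReal.ofReal (c * |Real.log ‖(γ b : ℂ)‖ - Real.log ‖(γ a : ℂ)‖|) ≤
      eVariationOn (φ ∘ γ) (Icc a b) := by
    have hdist : dist (φ (γ b)) (φ (γ a)) =
        c * |Real.log ‖(γ b : ℂ)‖ - Real.log ‖(γ a : ℂ)‖| := by
      rw [Real.dist_eq, ← mul_sub, abs_mul, abs_of_nonneg hc]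
    rw [← hdist, ← edist_dist]
    exact eVariationOn.edist_le (φ ∘ γ) (right_mem_Icc.2 hab) (left_mem_Icc.2 hab)
  have hlocal (K : ℝ≥0) (hK : 1 < K) :
      eVariationOn (φ ∘ γ) (Icc a b) ≤ K * eVariationOn γ (Icc a b) :=
    eVariationOn_comp_Icc_le_of_locally_lipschitzOnWith
      (fun p _ ↦ exists_lipschitzOnWith_mul_log_norm hc hK p) hab hγ hfar
  have hlim : Tendsto (fun K : ℝ≥0 ↦ K * eVariationOn γ (Icc a b)) (𝓝[>] 1)
      (𝓝 (eVariationOn γ (Icc a b))) := by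
    simpa using ENNReal.Tendsto.mul_const (b := eVariationOn γ (Icc a b))
      (ENNReal.tendsto_coe.2 (tendsto_id.mono_left (nhdsWithin_le_nhds (a := (1 : ℝ≥0)))))
      (Or.inl (by simp))
  exact hφ.trans (ge_of_tendsto hlim (eventually_mem_nhdsWithin.mono hlocal))

theorem cosh_mul_im_le_norm {D : ℝ} (hD : 0 ≤ D) (hz : Real.sinh D * z.im ≤ |z.re|) :
    Real.cosh D * z.im ≤ ‖(z : ℂ)‖ := by
  have hsq : (Real.sinh D * z.im) ^ 2 ≤ z.re ^ 2 := by
    rw [← sq_abs z.re]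
    exact pow_le_pow_left₀ (mul_nonneg (Real.sinh_nonneg_iff.2 hD) z.im_pos.le) hz 2
  rw [Complex.norm_eq_sqrt_sq_add_sq]
  refine Real.le_sqrt_of_sq_le ?_
  calc (Real.cosh D * z.im) ^ 2 = (Real.sinh D * z.im) ^ 2 + z.im ^ 2 := by
        rw [mul_pow, Real.cosh_sq]; ring
    _ ≤ z.re ^ 2 + z.im ^ 2 := by gcongr

end LogNorm

/-- A continuous path in the hyperbolic plane joining a point `γ 0` to its image
`λ² · (γ 0)` under the hyperbolic translation of length `2 log λ` along the imaginary
axis, and staying at hyperbolic distance at least `D` from the imaginary-axis geodesic,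
has length at least `cosh D · 2 log λ`. -/
theorem eVariationOn_ge_cosh_mul_translation_length
    (l : ℝ) (hl : 1 < l) (D : ℝ) (hD : 0 ≤ D)
    (γ : ℝ → ℍ) (hγ : ContinuousOn γ (Set.Icc 0 1))
    (hend : (γ 1 : ℂ) = (l ^ 2 : ℝ) * (γ 0 : ℂ))
    (hfar : ∀ t ∈ Set.Icc (0 : ℝ) 1, Real.sinh D * (γ t).im ≤ |(γ t).re|) :
    ENNReal.ofReal (Real.cosh D * (2 * Real.log l)) ≤ eVariationOn γ (Set.Icc 0 1) := by
  have hlog : Real.log ‖(γ 1 : ℂ)‖ - Real.log ‖(γ 0 : ℂ)‖ = 2 * Real.log l := by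
    have hl2 : (0 : ℝ) < l ^ 2 := by positivity
    rw [hend, norm_mul, Complex.norm_of_nonneg hl2.le,
      Real.log_mul hl2.ne' (norm_ne_zero_iff.2 (γ 0).ne_zero), Real.log_pow]
    push_cast
    ring
  have hlen := ofReal_mul_abs_log_norm_sub_le_eVariationOn (Real.cosh_pos D).le zero_le_one hγ
    fun t ht ↦ cosh_mul_im_le_norm hD (hfar t ht)
  rwa [hlog, abs_of_pos (mul_pos two_pos (Real.log_pos hl))] at hlen
end
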